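/- If a geodesic triangle in a CAT(0) space has the property that the Alexandrov angle at every interior point of each side equals π and the angles at the three vertices equal the corresponding Euclidean comparison angles, then the triangle with its interior is isometric to a Euclidean triangle (flat triangle rigidity: if one comparison angle equality holds, the triangle is flat). -/

import Mathlib

/-- A (unit-speed) geodesic segment from `x` to `y`, defined on `[0, dist x y]`. -/
def IsGeodesic {X : Type*} [MetricSpace X] (x y : X) (γ : ℝ → X) : Prop :=
  γ 0 = x ∧ γ (dist x y) = y ∧
    ∀ s ∈ Set.Icc (0:ℝ) (dist x y), ∀ t ∈ Set.Icc (0:ℝ) (dist x y),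
      dist (γ s) (γ t) = |s - t|

/-- A geodesic metric space: every pair of points is joined by a geodesic. -/
def GeodesicSpace (X : Type*) [MetricSpace X] : Prop :=
  ∀ x y : X, ∃ γ : ℝ → X, IsGeodesic x y γ

/-- The CAT(0) comparison axiom: for every geodesic triangle and every comparison
triangle in the Euclidean plane with the same side lengths, distances from the third
vertex to points of a side are bounded by the corresponding Euclidean distances. -/
def CAT0 (X : Type*) [MetricSpace X] : Prop :=
  GeodesicSpace X ∧
    ∀ (x₁ x₂ x₃ : X) (γ : ℝ → X), IsGeodesic x₁ x₂ γ →
      ∀ x₁' x₂' x₃' : EuclideanSpace ℝ (Fin 2),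
        dist x₁' x₂' = dist x₁ x₂ → dist x₁' x₃' = dist x₁ x₃ →
        dist x₂' x₃' = dist x₂ x₃ →
        ∀ t ∈ Set.Icc (0:ℝ) (dist x₁ x₂),
          dist x₃ (γ t) ≤ dist x₃' (x₁' + (t / dist x₁ x₂) • (x₂' - x₁'))

/-- A subset is (geodesically) convex if it contains every geodesic segment
between any two of its points. -/
def IsConvexSet {X : Type*} [MetricSpace X] (C : Set X) : Prop :=
  ∀ x ∈ C, ∀ y ∈ C, ∀ γ : ℝ → X, IsGeodesic x y γ →
    ∀ t ∈ Set.Icc (0:ℝ) (dist x y), γ t ∈ C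

/-- The Euclidean comparison angle at `p` of the triple `(p, a, b)`, given by the
law of cosines. -/
noncomputable def compAngle {X : Type*} [MetricSpace X] (p a b : X) : ℝ :=
  Real.arccos ((dist p a ^ 2 + dist p b ^ 2 - dist a b ^ 2) /
    (2 * dist p a * dist p b))

/-- The Alexandrov (upper) angle at `p` between two geodesics `γ₁, γ₂` issuing
from `p`: the limsup of comparison angles of small triangles at `p`. -/
noncomputable def alexAngle {X : Type*} [MetricSpace X] (p : X) (γ₁ γ₂ : ℝ → X) : ℝ :=
  Filter.limsup (fun t => compAngle p (γ₁ t) (γ₂ t)) (nhdsWithin (0:ℝ) (Set.Ioi 0))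

/-- The geodesic convex hull of a set: the smallest geodesically convex set
containing it. -/
def geodesicConvexHull {X : Type*} [MetricSpace X] (S : Set X) : Set X :=
  ⋂₀ {C : Set X | IsConvexSet C ∧ S ⊆ C}

namespace FlatTri

variable {X : Type*} [MetricSpace X]

lemma metric_bounds (p a b : X) :
    (dist p a ^ 2 + dist p b ^ 2 - dist a b ^ 2) ≤ 2 * dist p a * dist p b ∧
    -(2 * dist p a * dist p b) ≤ (dist p a ^ 2 + dist p b ^ 2 - dist a b ^ 2) := by
  have h1 := dist_triangle a p b
  have h2 := dist_triangle p a b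
  have h3 := dist_triangle p b a
  rw [dist_comm a p] at h1
  rw [dist_comm b a] at h3
  have h4 : 0 ≤ dist a b := dist_nonneg
  have h5 : 0 ≤ dist p a := dist_nonneg
  have h6 : 0 ≤ dist p b := dist_nonneg
  constructor
  · nlinarith [mul_nonneg (sub_nonneg.2 h2) (sub_nonneg.2 h3)]
  · nlinarith

lemma exists_comparison (x₁ x₂ x₃ : X) (h : x₁ ≠ x₂) :
    ∃ x₁' x₂' x₃' : EuclideanSpace ℝ (Fin 2),
      dist x₁' x₂' = dist x₁ x₂ ∧ dist x₁' x₃' = dist x₁ x₃ ∧ dist x₂' x₃' = dist x₂ x₃ := by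
  obtain ⟨hb1, hb2⟩ := metric_bounds x₁ x₂ x₃
  have ha : 0 < dist x₁ x₂ := dist_pos.2 h
  set a := dist x₁ x₂
  set b := dist x₁ x₃ with hb
  set c := dist x₂ x₃ with hc
  have hb0 : 0 ≤ b := dist_nonneg
  have hc0 : 0 ≤ c := dist_nonneg
  set u := (a ^ 2 + b ^ 2 - c ^ 2) / (2 * a) with hu
  have hua : 2 * a * u = a ^ 2 + b ^ 2 - c ^ 2 := by
    rw [hu]; field_simp
  have hub : u ≤ b := by
    by_contra hh
    push Not at hh
    nlinarith
  have hub' : -b ≤ u := by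
    by_contra hh
    push Not at hh
    nlinarith
  have hv : 0 ≤ b ^ 2 - u ^ 2 := by nlinarith
  have hs := Real.sq_sqrt hv
  refine ⟨!₂[0, 0], !₂[a, 0], !₂[u, √(b ^ 2 - u ^ 2)], ?_, ?_, ?_⟩
  · rw [EuclideanSpace.dist_eq, Real.sqrt_eq_iff_mul_self_eq (by positivity) ha.le]
    simp [Real.dist_eq, pow_two]
  · rw [EuclideanSpace.dist_eq, Real.sqrt_eq_iff_mul_self_eq (by positivity) hb0]
    simp [Real.dist_eq, Fin.sum_univ_two]
    rw [Real.sq_sqrt hv]; ring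
  · rw [EuclideanSpace.dist_eq, Real.sqrt_eq_iff_mul_self_eq (by positivity) hc0]
    simp [Real.dist_eq, Fin.sum_univ_two]
    rw [Real.sq_sqrt hv]; nlinarith

lemma stewart {E : Type*} [NormedAddCommGroup E] [InnerProductSpace ℝ E] (p a b : E) (s : ℝ) :
    dist p (a + s • (b - a)) ^ 2 =
      (1 - s) * dist p a ^ 2 + s * dist p b ^ 2 - s * (1 - s) * dist a b ^ 2 := by
  have e1 : p - (a + s • (b - a)) = (p - a) - s • (b - a) := by abel
  have e2 : p - b = (p - a) - (b - a) := by abel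
  have e3 : dist a b = ‖b - a‖ := by rw [dist_comm, dist_eq_norm]
  rw [e3, dist_eq_norm, dist_eq_norm, dist_eq_norm, e1, e2]
  simp only [@norm_sub_sq_real, norm_smul, inner_smul_right, mul_pow, Real.norm_eq_abs, sq_abs]
  ring

lemma cn (hX : CAT0 X) (a b p : X) (γ : ℝ → X) (hγ : IsGeodesic a b γ) (s : ℝ)
    (h0 : 0 ≤ s) (h1 : s ≤ 1) :
    dist p (γ (s * dist a b)) ^ 2 ≤
      (1 - s) * dist p a ^ 2 + s * dist p b ^ 2 - s * (1 - s) * dist a b ^ 2 := by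
  by_cases hab : a = b
  · subst hab
    have := hγ.1
    simp only [dist_self, mul_zero, this]
    nlinarith
  · obtain ⟨a', b', p', e1, e2, e3⟩ := exists_comparison a b p hab
    have hd : 0 < dist a b := dist_pos.2 hab
    have h := hX.2 a b p γ hγ a' b' p' e1 e2 e3 (s * dist a b) ⟨by positivity, by nlinarith⟩
    rw [mul_div_assoc, div_self hd.ne', mul_one] at h
    have h2 := pow_le_pow_left₀ dist_nonneg h 2
    rw [stewart, dist_comm p' a', dist_comm p' b', e1, e2, e3, dist_comm a p, dist_comm b p] at h2
    exact h2

/-- Constant speed geodesics in a CAT(0) space. -/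
structure Geo (G : X → X → ℝ → X) : Prop where
  left : ∀ a b s, 0 ≤ s → s ≤ 1 → dist a (G a b s) = s * dist a b
  right : ∀ a b s, 0 ≤ s → s ≤ 1 → dist (G a b s) b = (1 - s) * dist a b
  mid : ∀ a b s t, 0 ≤ s → s ≤ 1 → 0 ≤ t → t ≤ 1 →
    dist (G a b s) (G a b t) = |s - t| * dist a b
  cn : ∀ a b p s, 0 ≤ s → s ≤ 1 → dist p (G a b s) ^ 2 ≤
      (1 - s) * dist p a ^ 2 + s * dist p b ^ 2 - s * (1 - s) * dist a b ^ 2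
  geo : ∀ a b : X, ∃ γ : ℝ → X, IsGeodesic a b γ ∧ ∀ s, G a b s = γ (s * dist a b)

lemma exists_geo (hX : CAT0 X) : ∃ G : X → X → ℝ → X, Geo G := by
  choose γ hγ using hX.1
  have hm : ∀ (a b : X) (s : ℝ), 0 ≤ s → s ≤ 1 → s * dist a b ∈ Set.Icc (0:ℝ) (dist a b) := by
    intro a b s h0 h1
    have : 0 ≤ dist a b := dist_nonneg
    exact ⟨by positivity, by nlinarith⟩
  have hmid : ∀ a b s t, 0 ≤ s → s ≤ 1 → 0 ≤ t → t ≤ 1 →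
      dist (γ a b (s * dist a b)) (γ a b (t * dist a b)) = |s - t| * dist a b := by
    intro a b s t h0 h1 h2 h3
    rw [(hγ a b).2.2 _ (hm a b s h0 h1) _ (hm a b t h2 h3), ← sub_mul, abs_mul,
      abs_of_nonneg (dist_nonneg (x := a))]
  refine ⟨fun a b s => γ a b (s * dist a b), ?_, ?_, hmid, ?_, ?_⟩
  · intro a b s h0 h1
    have := hmid a b 0 s le_rfl zero_le_one h0 h1
    rw [zero_mul, (hγ a b).1] at this
    simpa [abs_of_nonneg h0] using this
  · intro a b s h0 h1
    have := hmid a b s 1 h0 h1 zero_le_one le_rfl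
    rw [one_mul, (hγ a b).2.1] at this
    rw [this, abs_sub_comm, abs_of_nonneg (by linarith)]
  · intro a b p s h0 h1
    exact FlatTri.cn hX a b p _ (hγ a b) s h0 h1
  · intro a b
    exact ⟨_, hγ a b, fun s => rfl⟩

variable {G : X → X → ℝ → X}

lemma Geo.unique (hG : Geo G) {a b m : X} {s : ℝ} (h0 : 0 ≤ s) (h1 : s ≤ 1)
    (ha : dist a m = s * dist a b) (hb : dist m b = (1 - s) * dist a b) : m = G a b s := by
  have h := hG.cn a b m s h0 h1
  rw [dist_comm m a, ha, hb] at h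
  have h2 : dist m (G a b s) ^ 2 ≤ 0 := by
    calc _ ≤ _ := h
      _ = 0 := by ring
  have h3 : dist m (G a b s) = 0 := by
    have := sq_nonneg (dist m (G a b s))
    exact pow_eq_zero_iff (two_ne_zero) |>.1 (le_antisymm h2 this)
  exact dist_eq_zero.1 h3

lemma Geo.zero (hG : Geo G) (a b : X) : G a b 0 = a :=
  (hG.unique le_rfl zero_le_one (by simp) (by simp)).symm

lemma Geo.one (hG : Geo G) (a b : X) : G a b 1 = b :=
  (hG.unique zero_le_one le_rfl (by simp) (by simp)).symm

lemma Geo.sub (hG : Geo G) (a b : X) {s l : ℝ} (h0 : 0 ≤ s) (h1 : s ≤ 1) (h2 : 0 ≤ l)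
    (h3 : l ≤ 1) : G a b (l * s) = G a (G a b s) l := by
  have h4 : 0 ≤ l * s := by positivity
  have h5 : l * s ≤ 1 := by nlinarith
  apply hG.unique h2 h3
  · rw [hG.left _ _ _ h4 h5, hG.left _ _ _ h0 h1]; ring
  · rw [hG.mid _ _ _ _ h4 h5 h0 h1, hG.left _ _ _ h0 h1, abs_sub_comm, abs_of_nonneg]
    · ring
    · nlinarith

/-- the numerator of the law of cosines -/
noncomputable def N (G : X → X → ℝ → X) (x y z : X) (s t : ℝ) : ℝ :=
  s ^ 2 * dist x y ^ 2 + t ^ 2 * dist x z ^ 2 - dist (G x y s) (G x z t) ^ 2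

lemma N_symm (x y z : X) (s t : ℝ) : N G x y z s t = N G x z y t s := by
  unfold N; rw [dist_comm (G x y s)]; ring

lemma N_left (hG : Geo G) (x y z : X) {s t l : ℝ} (h0 : 0 ≤ s) (h1 : s ≤ 1) (h2 : 0 ≤ t)
    (h3 : t ≤ 1) (h4 : 0 ≤ l) (h5 : l ≤ 1) : l * N G x y z s t ≤ N G x y z (l * s) t := by
  unfold N
  have h := hG.cn x (G x y s) (G x z t) l h4 h5
  rw [← hG.sub x y h0 h1 h4 h5, hG.left _ _ _ h0 h1, dist_comm (G x z t) x, hG.left _ _ _ h2 h3,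
    dist_comm (G x z t), dist_comm (G x z t)] at h
  nlinarith

lemma N_mul (hG : Geo G) (x y z : X) {s t l m : ℝ} (h0 : 0 ≤ s) (h1 : s ≤ 1) (h2 : 0 ≤ t)
    (h3 : t ≤ 1) (h4 : 0 ≤ l) (h5 : l ≤ 1) (h6 : 0 ≤ m) (h7 : m ≤ 1) :
    l * m * N G x y z s t ≤ N G x y z (l * s) (m * t) := by
  have a1 := N_left hG x y z h0 h1 h2 h3 h4 h5
  have a2 := N_left hG x z y h2 h3 (s := t) (t := l * s) (by positivity) (by nlinarith) h6 h7
  rw [N_symm x z y, N_symm x z y] at a2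
  nlinarith

lemma N_one (hG : Geo G) (x y z : X) :
    N G x y z 1 1 = dist x y ^ 2 + dist x z ^ 2 - dist y z ^ 2 := by
  unfold N; rw [hG.one, hG.one]; ring

lemma N_eq (hG : Geo G) (x y z : X) 
    (H : ∀ s t : ℝ, 0 < s → s ≤ 1 → 0 < t → t ≤ 1 → ∃ l m : ℝ, 0 < l ∧ l ≤ 1 ∧ 0 < m ∧ m ≤ 1 ∧
      N G x y z (l * s) (m * t) ≤
        (l * s) * (m * t) * (dist x y ^ 2 + dist x z ^ 2 - dist y z ^ 2))
    {s t : ℝ} (h0 : 0 ≤ s) (h1 : s ≤ 1) (h2 : 0 ≤ t) (h3 : t ≤ 1) :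
    N G x y z s t = s * t * (dist x y ^ 2 + dist x z ^ 2 - dist y z ^ 2) := by
  rcases h0.eq_or_lt with rfl | h0'
  · unfold N; rw [hG.zero, hG.left _ _ _ h2 h3]; ring
  rcases h2.eq_or_lt with rfl | h2'
  · unfold N; rw [hG.zero, dist_comm (G x y s) x, hG.left _ _ _ h0 h1]; ring
  apply le_antisymm
  · obtain ⟨l, m, l0, l1, m0, m1, h⟩ := H s t h0' h1 h2' h3
    have a := N_mul hG x y z h0 h1 h2 h3 l0.le l1 m0.le m1
    have hp : 0 < l * m := by positivity
    refine le_of_mul_le_mul_left ?_ hp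
    linarith
  · have a := N_mul hG x y z zero_le_one le_rfl zero_le_one le_rfl h0 h1 h2 h3
    rwa [N_one hG, mul_one, mul_one] at a

/-- flatness: the two sides at `x` embed isometrically -/
def Flat (G : X → X → ℝ → X) (x y z : X) : Prop :=
  ∀ s t : ℝ, 0 ≤ s → s ≤ 1 → 0 ≤ t → t ≤ 1 →
    N G x y z s t = s * t * (dist x y ^ 2 + dist x z ^ 2 - dist y z ^ 2)

lemma flat_diag (hG : Geo G) (x y z : X)
    (H : ∀ e : ℝ, 0 < e → e ≤ 1 → e * dist y z ≤ dist (G x y e) (G x z e)) : Flat G x y z := by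
  intro s t h0 h1 h2 h3
  refine N_eq hG x y z ?_ h0 h1 h2 h3
  intro s t h0 h1 h2 h3
  refine ⟨t, s, h2, h3, h0, h1, ?_⟩
  have h := H (t * s) (by positivity) (by nlinarith)
  rw [mul_comm s t]
  have h4 := pow_le_pow_left₀ (by positivity) h 2
  unfold N
  nlinarith

lemma N_diag_upper (hG : Geo G) (x y z : X) {e : ℝ} (h0 : 0 ≤ e) (h1 : e ≤ 1) :
    dist (G x y e) (G x z e) ≤ e * dist y z := by
  have a := N_mul hG x y z zero_le_one le_rfl zero_le_one le_rfl h0 h1 h0 h1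
  rw [N_one hG, mul_one] at a
  unfold N at a
  refine le_of_sq_le_sq ?_ (by positivity)
  nlinarith

lemma Flat.diag {x y z : X} (hF : Flat G x y z) {e : ℝ} (h0 : 0 ≤ e) (h1 : e ≤ 1) :
    dist (G x y e) (G x z e) = e * dist y z := by
  have a := hF e e h0 h1 h0 h1
  unfold N at a
  refine (pow_left_inj₀ dist_nonneg (by positivity) two_ne_zero).1 ?_
  nlinarith

lemma Flat.sub {x y z : X} (hG : Geo G) (hF : Flat G x y z) {r q : ℝ} (h0 : 0 ≤ r) (h1 : r ≤ q)
    (h2 : q ≤ 1) : Flat G x (G y z r) (G y z q) := by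
  apply flat_diag hG
  intro e e0 e1
  have hr := N_diag_upper hG x y (G y z r) e0.le e1
  have hq := N_diag_upper hG x (G y z q) z e0.le e1
  rw [hG.left _ _ _ h0 (h1.trans h2)] at hr
  rw [hG.right _ _ _ (h0.trans h1) h2] at hq
  have hd := hF.diag e0.le e1
  rw [hG.mid _ _ _ _ h0 (h1.trans h2) (h0.trans h1) h2, abs_sub_comm, abs_of_nonneg (by linarith)]
  have := dist_triangle4 (G x y e) (G x (G y z r) e) (G x (G y z q) e) (G x z e)
  nlinarith

lemma Flat.symm {x y z : X} (hF : Flat G x y z) : Flat G x z y := by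
  intro s t h0 h1 h2 h3
  rw [N_symm, hF t s h2 h3 h0 h1, dist_comm y z]; ring

lemma Flat.side {x y z : X} (hG : Geo G) (hF : Flat G x y z) {r : ℝ} (h0 : 0 ≤ r) (h1 : r ≤ 1) :
    dist x (G y z r) ^ 2 = 
      (1 - r) * dist x y ^ 2 + r * dist x z ^ 2 - r * (1 - r) * dist y z ^ 2 := by
  apply le_antisymm (hG.cn _ _ _ _ h0 h1)
  have key : ∀ u : ℝ, 0 < u → u < 1 →
      (1 - r) * dist x y ^ 2 + r * dist x z ^ 2 - r * (1 - r) * dist y z ^ 2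
        ≤ dist x (G y z r) ^ 2 + u * dist x y ^ 2 := by
    intro u u0 u1
    have e := hF (1 - u) 1 (by linarith) (by linarith) zero_le_one le_rfl
    unfold N at e
    rw [hG.one] at e
    have hc := hG.cn x y (G y z r) (1 - u) (by linarith) (by linarith)
    rw [dist_comm _ y, hG.left _ _ _ h0 h1, dist_comm _ x, dist_comm (G y z r)] at hc
    have ht := dist_triangle (G x y (1 - u)) (G y z r) z
    rw [hG.right _ _ _ h0 h1] at ht
    set f := dist (G x y (1 - u)) z
    set d := dist (G x y (1 - u)) (G y z r)
    set c := dist y z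
    have hf : 0 ≤ f := dist_nonneg
    have h5 := pow_le_pow_left₀ hf ht 2
    -- r f² ≤ d² + r(1-r)c²
    have h6 : r * f ^ 2 ≤ d ^ 2 + r * (1 - r) * c ^ 2 := by
      have : r * f ^ 2 ≤ r * (d + (1 - r) * c) ^ 2 := by gcongr
      nlinarith [mul_nonneg (sub_nonneg.2 h1) (sq_nonneg (d - r * c))]
    have h7 : u * ((1 - r) * dist x y ^ 2 + r * dist x z ^ 2 - r * (1 - r) * c ^ 2)
        ≤ u * (dist x (G y z r) ^ 2 + u * dist x y ^ 2) := by
      have hru : 0 ≤ r * u ^ 2 * dist x y ^ 2 := by positivity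
      have e' : f ^ 2 = (1 - u) ^ 2 * dist x y ^ 2 + 1 ^ 2 * dist x z ^ 2 -
        (1 - u) * 1 * (dist x y ^ 2 + dist x z ^ 2 - c ^ 2) := by linarith
      rw [e'] at h6
      nlinarith
    exact le_of_mul_le_mul_left h7 u0
  apply le_of_forall_pos_le_add
  intro ε hε
  have hA : 0 ≤ dist x y ^ 2 := by positivity
  set A := dist x y ^ 2
  have hpos : 0 < ε / (A + ε + 1) := by positivity
  have hlt : ε / (A + ε + 1) < 1 := by rw [div_lt_one (by positivity)]; linarith
  refine (key _ hpos hlt).trans ?_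
  gcongr
  rw [div_mul_eq_mul_div, div_le_iff₀ (by positivity)]
  nlinarith

/-- the flat triangle -/
def P (G : X → X → ℝ → X) (x y z : X) (s r : ℝ) : X := G x (G y z r) s

/-- the Euclidean triangle -/
noncomputable def Q {E : Type*} [AddCommGroup E] [Module ℝ E] (x y z : E) (s r : ℝ) : E :=
  x + s • ((y + r • (z - y)) - x)

lemma dist_Q {E : Type*} [NormedAddCommGroup E] [InnerProductSpace ℝ E] (x v w : E) (s t : ℝ) :
    dist (x + s • (v - x)) (x + t • (w - x)) ^ 2 = s ^ 2 * dist x v ^ 2 + t ^ 2 * dist x w ^ 2 -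
      s * t * (dist x v ^ 2 + dist x w ^ 2 - dist v w ^ 2) := by
  have e1 : dist x (x + s • (v - x)) ^ 2 = s ^ 2 * dist x v ^ 2 := by
    rw [stewart, dist_self]; ring
  have e2 := stewart w x v s
  rw [dist_comm w x, dist_comm w v] at e2
  rw [stewart, dist_comm _ x, dist_comm _ w, e1, e2]; ring

lemma dist_PQ (hG : Geo G) {x y z : X} (hF : Flat G x y z)
    {E : Type*} [NormedAddCommGroup E] [InnerProductSpace ℝ E] {x' y' z' : E}
    (h₁ : dist x' y' = dist x y) (h₂ : dist x' z' = dist x z)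
    (h₃ : dist y' z' = dist y z) {s r t q : ℝ} (s0 : 0 ≤ s) (s1 : s ≤ 1) (r0 : 0 ≤ r) (r1 : r ≤ 1)
    (t0 : 0 ≤ t) (t1 : t ≤ 1) (q0 : 0 ≤ q) (q1 : q ≤ 1) :
    dist (P G x y z s r) (P G x y z t q) = dist (Q x' y' z' s r) (Q x' y' z' t q) := by
  have hFrq : Flat G x (G y z r) (G y z q) := by
    rcases le_total r q with h | h
    · exact hF.sub hG r0 h q1
    · exact (hF.sub hG q0 h r1).symm
  have a := hFrq s t s0 s1 t0 t1
  unfold N at a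
  rw [hF.side hG r0 r1, hF.side hG q0 q1, hG.mid _ _ _ _ r0 r1 q0 q1] at a
  refine (pow_left_inj₀ dist_nonneg dist_nonneg two_ne_zero).1 ?_
  unfold P Q
  rw [dist_Q, stewart, stewart, h₁, h₂, h₃]
  have : dist (y' + r • (z' - y')) (y' + q • (z' - y')) ^ 2 = (|r - q| * dist y z) ^ 2 := by
    rw [dist_add_left, dist_eq_norm, ← sub_smul, norm_smul, Real.norm_eq_abs, ← dist_eq_norm,
      dist_comm z', h₃]
  rw [this]
  linarith

lemma mem_hull_iff {E : Type*} [AddCommGroup E] [Module ℝ E] (x y z p : E) :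
    p ∈ convexHull ℝ {x, y, z} ↔
      ∃ s r : ℝ, 0 ≤ s ∧ s ≤ 1 ∧ 0 ≤ r ∧ r ≤ 1 ∧ p = Q x y z s r := by
  rw [convexHull_insert (by simp), convexHull_pair]
  simp only [mem_convexJoin, Set.mem_singleton_iff, exists_eq_left, segment_eq_image',
    Set.mem_image, Set.mem_Icc]
  constructor
  · rintro ⟨_, ⟨r, ⟨r0, r1⟩, rfl⟩, s, ⟨s0, s1⟩, rfl⟩
    exact ⟨s, r, s0, s1, r0, r1, rfl⟩
  · rintro ⟨s, r, s0, s1, r0, r1, rfl⟩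
    exact ⟨_, ⟨r, ⟨r0, r1⟩, rfl⟩, s, ⟨s0, s1⟩, rfl⟩

/-- parametrised triangle -/
def T (G : X → X → ℝ → X) (x y z : X) : Set X :=
  {p | ∃ s r : ℝ, 0 ≤ s ∧ s ≤ 1 ∧ 0 ≤ r ∧ r ≤ 1 ∧ p = P G x y z s r}

lemma T_convex (hX : CAT0 X) (hG : Geo G) {x y z : X} (hF : Flat G x y z)
    {E : Type*} [NormedAddCommGroup E] [InnerProductSpace ℝ E] {x' y' z' : E}
    (h₁ : dist x' y' = dist x y) (h₂ : dist x' z' = dist x z)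
    (h₃ : dist y' z' = dist y z) : IsConvexSet (T G x y z) := by
  rintro p ⟨s, r, s0, s1, r0, r1, hp⟩ q ⟨s', r', s0', s1', r0', r1', hq⟩ γ hγ t ⟨t0, t1⟩
  rcases eq_or_ne p q with hpq | hpq
  · have : t = 0 := by
      rw [hpq, dist_self] at t1
      exact le_antisymm t1 t0
    rw [this, hγ.1]
    exact ⟨s, r, s0, s1, r0, r1, hp⟩
  have hd : 0 < dist p q := dist_pos.2 hpq
  set l := t / dist p q with hl
  have l0 : 0 ≤ l := by positivity
  have l1 : l ≤ 1 := by rw [hl, div_le_one hd]; exact t1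
  have htl : t = l * dist p q := by rw [hl]; field_simp
  set p' := Q x' y' z' s r with hp'
  set q' := Q x' y' z' s' r' with hq'
  have hpqd : dist p q = dist p' q' := by
    rw [hp, hq]; exact dist_PQ hG hF h₁ h₂ h₃ s0 s1 r0 r1 s0' s1' r0' r1'
  have hm : p' + l • (q' - p') ∈ convexHull ℝ {x', y', z'} := by
    have c := convex_convexHull ℝ ({x', y', z'} : Set E)
    exact c.add_smul_sub_mem ((mem_hull_iff _ _ _ _).2 ⟨s, r, s0, s1, r0, r1, rfl⟩)
      ((mem_hull_iff _ _ _ _).2 ⟨s', r', s0', s1', r0', r1', rfl⟩) ⟨l0, l1⟩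
  obtain ⟨u, v, u0, u1, v0, v1, huv⟩ := (mem_hull_iff _ _ _ _).1 hm
  refine ⟨u, v, u0, u1, v0, v1, ?_⟩
  have e1 : dist p (P G x y z u v) = l * dist p q := by
    rw [hpqd, hp, dist_PQ hG hF h₁ h₂ h₃ s0 s1 r0 r1 u0 u1 v0 v1, ← huv, ← hp']
    rw [dist_self_add_right, norm_smul, Real.norm_eq_abs, abs_of_nonneg l0, dist_comm, dist_eq_norm]
  have e2 : dist (P G x y z u v) q = (1 - l) * dist p q := by
    rw [hpqd, hq, dist_PQ hG hF h₁ h₂ h₃ u0 u1 v0 v1 s0' s1' r0' r1', ← huv, ← hq']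
    have : p' + l • (q' - p') - q' = (1 - l) • (p' - q') := by module
    rw [dist_eq_norm, this, norm_smul, Real.norm_eq_abs, abs_of_nonneg (by linarith), dist_eq_norm]
  rw [hG.unique l0 l1 e1 e2]
  apply hG.unique l0 l1
  · have h := hγ.2.2 0 ⟨le_rfl, hd.le⟩ t ⟨t0, t1⟩
    rw [hγ.1] at h
    rw [h, zero_sub, abs_neg, abs_of_nonneg t0, htl]
  · have h := hγ.2.2 t ⟨t0, t1⟩ (dist p q) ⟨hd.le, le_rfl⟩
    rw [hγ.2.1] at h
    rw [h, abs_sub_comm, abs_of_nonneg (by linarith)]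
    linarith

lemma hull_eq (hX : CAT0 X) (hG : Geo G) {x y z : X} (hF : Flat G x y z)
    {E : Type*} [NormedAddCommGroup E] [InnerProductSpace ℝ E] {x' y' z' : E}
    (h₁ : dist x' y' = dist x y) (h₂ : dist x' z' = dist x z)
    (h₃ : dist y' z' = dist y z) : geodesicConvexHull {x, y, z} = T G x y z := by
  apply Set.Subset.antisymm
  · apply Set.sInter_subset_of_mem
    refine ⟨T_convex hX hG hF h₁ h₂ h₃, ?_⟩
    rintro p (rfl | rfl | rfl)
    · exact ⟨0, 0, le_rfl, zero_le_one, le_rfl, zero_le_one, by rw [P, hG.zero]⟩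
    · exact ⟨1, 0, zero_le_one, le_rfl, le_rfl, zero_le_one, by rw [P, hG.zero, hG.one]⟩
    · exact ⟨1, 1, zero_le_one, le_rfl, zero_le_one, le_rfl, by rw [P, hG.one, hG.one]⟩
  · rintro p ⟨s, r, s0, s1, r0, r1, rfl⟩ C ⟨hC, hS⟩
    have step : ∀ a ∈ C, ∀ b ∈ C, ∀ s : ℝ, 0 ≤ s → s ≤ 1 → G a b s ∈ C := by
      intro a ha b hb s s0 s1
      obtain ⟨γ, hγ, he⟩ := hG.geo a b
      rw [he]
      have : 0 ≤ dist a b := dist_nonneg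
      exact hC a ha b hb γ hγ _ ⟨by positivity, by nlinarith⟩
    exact step _ (hS (by simp)) _ (step _ (hS (by simp)) _ (hS (by simp)) _ r0 r1) _ s0 s1

lemma geo_eq (hG : Geo G) {a b : X} {γ : ℝ → X} (hγ : IsGeodesic a b γ) (hab : a ≠ b) {t : ℝ}
    (t0 : 0 ≤ t) (t1 : t ≤ dist a b) : γ t = G a b (t / dist a b) := by
  have hd : 0 < dist a b := dist_pos.2 hab
  apply hG.unique (by positivity) (by rwa [div_le_one hd])
  · have h := hγ.2.2 0 ⟨le_rfl, hd.le⟩ t ⟨t0, t1⟩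
    rw [hγ.1] at h
    rw [h, zero_sub, abs_neg, abs_of_nonneg t0]; field_simp
  · have h := hγ.2.2 t ⟨t0, t1⟩ (dist a b) ⟨hd.le, le_rfl⟩
    rw [hγ.2.1] at h
    rw [h, abs_sub_comm, abs_of_nonneg (by linarith)]
    field_simp

lemma ratio_mem (p a b : X) :
    (dist p a ^ 2 + dist p b ^ 2 - dist a b ^ 2) / (2 * dist p a * dist p b) ∈
      Set.Icc (-1 : ℝ) 1 := by
  obtain ⟨h1, h2⟩ := metric_bounds p a b
  have h0 : 0 ≤ 2 * dist p a * dist p b := by positivity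
  constructor
  · rcases h0.eq_or_lt with h | h
    · rw [← h]; simp
    · rw [le_div_iff₀ h]; linarith
  · exact div_le_one_of_le₀ h1 h0

lemma angle_eq (x y z : X) {E : Type*} [NormedAddCommGroup E] [InnerProductSpace ℝ E]
    {x' y' z' : E} (h₁ : dist x' y' = dist x y) (h₂ : dist x' z' = dist x z)
    (h₃ : dist y' z' = dist y z) : EuclideanGeometry.angle y' x' z' = compAngle x y z := by
  unfold EuclideanGeometry.angle InnerProductGeometry.angle compAngle
  rw [← h₁, ← h₂, ← h₃]
  have e : y' - z' = (y' - x') - (z' - x') := by abel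
  rw [dist_comm x' y', dist_comm x' z', dist_eq_norm y' z', e, @norm_sub_sq_real, dist_eq_norm,
    dist_eq_norm]
  congr 1
  simp only [vsub_eq_sub]
  have e2 : ‖y' - x'‖ ^ 2 + ‖z' - x'‖ ^ 2 - (‖y' - x'‖ ^ 2 - 2 * inner ℝ (y' - x') (z' - x') +
    ‖z' - x'‖ ^ 2) = 2 * inner ℝ (y' - x') (z' - x') := by ring
  rw [e2, mul_assoc, mul_div_mul_left _ _ two_ne_zero]

lemma flat_of_angle (hG : Geo G) {x y z : X} (hxy : x ≠ y) (hxz : x ≠ z)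
    {γxy γxz : ℝ → X} (hγxy : IsGeodesic x y γxy) (hγxz : IsGeodesic x z γxz)
    (hangle : alexAngle x γxy γxz = compAngle x y z) : Flat G x y z := by
  have ha : 0 < dist x y := dist_pos.2 hxy
  have hb : 0 < dist x z := dist_pos.2 hxz
  -- comparison angle along the sides
  have comp : ∀ t : ℝ, 0 < t → t ≤ dist x y → t ≤ dist x z →
      ((dist x (γxy t) ^ 2 + dist x (γxz t) ^ 2 - dist (γxy t) (γxz t) ^ 2) /
        (2 * dist x (γxy t) * dist x (γxz t)))
        = N G x y z (t / dist x y) (t / dist x z) / (2 * t * t) := by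
    intro t t0 ta tb
    rw [geo_eq hG hγxy hxy t0.le ta, geo_eq hG hγxz hxz t0.le tb,
      hG.left _ _ _ (by positivity) (by rwa [div_le_one ha]),
      hG.left _ _ _ (by positivity) (by rwa [div_le_one hb])]
    unfold N
    rw [div_mul_cancel₀ _ ha.ne', div_mul_cancel₀ _ hb.ne', ← mul_pow, ← mul_pow,
      div_mul_cancel₀ _ ha.ne', div_mul_cancel₀ _ hb.ne']
  have mono : ∀ t e : ℝ, 0 < t → t ≤ e → e ≤ dist x y → e ≤ dist x z →
      compAngle x (γxy t) (γxz t) ≤ compAngle x (γxy e) (γxz e) := by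
    intro t e t0 te ea eb
    have e0 : 0 < e := t0.trans_le te
    unfold compAngle
    rw [comp t t0 (te.trans ea) (te.trans eb), comp e e0 ea eb]
    apply Real.arccos_le_arccos
    have h := N_mul hG x y z (s := e / dist x y) (t := e / dist x z) (l := t / e) (m := t / e)
      (by positivity) (by rwa [div_le_one ha]) (by positivity) (by rwa [div_le_one hb])
      (by positivity) (by rwa [div_le_one e0]) (by positivity) (by rwa [div_le_one e0])
    rw [div_mul_div_cancel₀ e0.ne', div_mul_div_cancel₀ e0.ne'] at h
    rw [div_le_div_iff₀ (by positivity) (by positivity)]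
    have h' : t / e * (t / e) * N G x y z (e / dist x y) (e / dist x z) * (2 * e * e) =
      N G x y z (e / dist x y) (e / dist x z) * (2 * t * t) := by field_simp
    rw [← h']
    gcongr
  have le : ∀ e : ℝ, 0 < e → e ≤ dist x y → e ≤ dist x z →
      compAngle x y z ≤ compAngle x (γxy e) (γxz e) := by
    intro e e0 ea eb
    rw [← hangle]
    unfold alexAngle
    apply Filter.limsup_le_of_le
    · refine Filter.IsCoboundedUnder.of_frequently_ge (a := 0) ?_
      exact Filter.Frequently.of_forall fun t => Real.arccos_nonneg _
    · filter_upwards [Ioo_mem_nhdsGT e0] with t ht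
      exact mono t e ht.1 ht.2.le ea eb
  intro s t h0 h1 h2 h3
  refine N_eq hG x y z ?_ h0 h1 h2 h3
  intro s t h0 h1 h2 h3
  have hsa : 0 < s * dist x y := by positivity
  have htb : 0 < t * dist x z := by positivity
  obtain ⟨e, e0, ea, eb⟩ : ∃ e, 0 < e ∧ e ≤ s * dist x y ∧ e ≤ t * dist x z :=
    ⟨min (s * dist x y) (t * dist x z), lt_min hsa htb, min_le_left _ _, min_le_right _ _⟩
  have ea' : e ≤ dist x y := ea.trans (by nlinarith)
  have eb' : e ≤ dist x z := eb.trans (by nlinarith)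
  refine ⟨e / (s * dist x y), e / (t * dist x z), by positivity, by rwa [div_le_one hsa],
    by positivity, by rwa [div_le_one htb], ?_⟩
  have e1 : e / (s * dist x y) * s = e / dist x y := by field_simp
  have e2 : e / (t * dist x z) * t = e / dist x z := by field_simp
  rw [e1, e2]
  have h := le e e0 ea' eb'
  unfold compAngle at h
  have h' := (Real.strictAntiOn_arccos.le_iff_ge (ratio_mem _ _ _) (ratio_mem _ _ _)).1 h
  rw [comp e e0 ea' eb', div_le_div_iff₀ (by positivity) (by positivity)] at h'
  rw [div_mul_div_comm, div_mul_eq_mul_div, le_div_iff₀ (by positivity)]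
  nlinarith

end FlatTri

/-- Flat triangle rigidity in a CAT(0) space: if the Alexandrov angle of a geodesic
triangle at one vertex equals the corresponding Euclidean comparison angle, then the
triangle with its interior (the convex hull of its vertices) is isometric to the
Euclidean comparison triangle. -/
theorem cat0_flat_triangle {X : Type*} [MetricSpace X] (hX : CAT0 X)
    (x y z : X) (hxy : x ≠ y) (hyz : y ≠ z) (hxz : x ≠ z)
    (γxy γxz : ℝ → X) (hγxy : IsGeodesic x y γxy) (hγxz : IsGeodesic x z γxz)
    (x' y' z' : EuclideanSpace ℝ (Fin 2))
    (h₁ : dist x' y' = dist x y) (h₂ : dist x' z' = dist x z)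
    (h₃ : dist y' z' = dist y z)
    (hangle : alexAngle x γxy γxz = EuclideanGeometry.angle y' x' z') :
    ∃ f : X → EuclideanSpace ℝ (Fin 2),
      (∀ p ∈ geodesicConvexHull {x, y, z}, ∀ q ∈ geodesicConvexHull {x, y, z},
        dist (f p) (f q) = dist p q) ∧
      f '' geodesicConvexHull {x, y, z} = convexHull ℝ {x', y', z'} := by
  classical
  obtain ⟨G, hG⟩ := FlatTri.exists_geo hX
  have hF : FlatTri.Flat G x y z := FlatTri.flat_of_angle hG hxy hxz hγxy hγxz
    (hangle.trans (FlatTri.angle_eq x y z h₁ h₂ h₃))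
  rw [FlatTri.hull_eq hX hG hF h₁ h₂ h₃]
  have hch : ∀ p : X, ∃ w : EuclideanSpace ℝ (Fin 2), ∀ s r : ℝ, 0 ≤ s → s ≤ 1 → 0 ≤ r → r ≤ 1 →
      p = FlatTri.P G x y z s r → w = FlatTri.Q x' y' z' s r := by
    intro p
    by_cases hp : p ∈ FlatTri.T G x y z
    · obtain ⟨s, r, s0, s1, r0, r1, hp⟩ := hp
      refine ⟨FlatTri.Q x' y' z' s r, ?_⟩
      intro t q t0 t1 q0 q1 hp'
      rw [← dist_eq_zero, ← FlatTri.dist_PQ hG hF h₁ h₂ h₃ s0 s1 r0 r1 t0 t1 q0 q1, ← hp, ← hp',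
        dist_self]
    · refine ⟨0, fun s r s0 s1 r0 r1 h => (hp ⟨s, r, s0, s1, r0, r1, h⟩).elim⟩
  choose f hf using hch
  refine ⟨f, ?_, ?_⟩
  · rintro p ⟨s, r, s0, s1, r0, r1, hp⟩ q ⟨s', r', s0', s1', r0', r1', hq⟩
    rw [hf p s r s0 s1 r0 r1 hp, hf q s' r' s0' s1' r0' r1' hq, hp, hq,
      FlatTri.dist_PQ hG hF h₁ h₂ h₃ s0 s1 r0 r1 s0' s1' r0' r1']
  · ext w
    rw [FlatTri.mem_hull_iff]
    constructor
    · rintro ⟨p, ⟨s, r, s0, s1, r0, r1, hp⟩, rfl⟩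
      exact ⟨s, r, s0, s1, r0, r1, hf p s r s0 s1 r0 r1 hp⟩
    · rintro ⟨s, r, s0, s1, r0, r1, rfl⟩
      exact ⟨_, ⟨s, r, s0, s1, r0, r1, rfl⟩, hf _ s r s0 s1 r0 r1 rfl⟩
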